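/- Let $\gamma>1$, $\rho_1>0$, $p_1>0$, and $u_1>0$ be given, and set $M_1^2 = u_1^2\rho_1/(\gamma p_1)$ (the square of the Mach number $u_1/c_1$ with $c_1=\sqrt{\gamma p_1/\rho_1}$). Then there exists a unique pair $(\rho_2,p_2)$ with $\rho_2>\rho_1$ and $p_2>0$ satisfying the Rankine–Hugoniot relations $u_1^2 = (p_2-p_1)(\rho_2-\rho_1)/(\rho_1\rho_2)$ and $p_2/p_1 = ((\gamma+1)\rho_2-(\gamma-1)\rho_1)/((\gamma+1)\rho_1-(\gamma-1)\rho_2)$. Moreover, this unique solution satisfies $(\gamma+1)\rho_1-(\gamma-1)\rho_2>0$ and $\rho_2/\rho_1 = \big(4+(\gamma+1)M_1^2+M_1\sqrt{16+(\gamma+1)^2M_1^2}\big)/\big(2(2+(\gamma-1)M_1^2)\big)$. -/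

import Mathlib

/-!
In terms of the compression ratio `t = ρ₂ / ρ₁`, the second Rankine–Hugoniot relation gives
`p₂ / p₁` as a function of `t`, and the first then becomes the quadratic equation
`2 (t - 1)² = M₁² t ((γ + 1) - (γ - 1) t)`. Its left-hand side minus its right-hand side has leading
coefficient `2 + (γ - 1) M₁²` and is negative at `t = 1`. Hence exactly one root exceeds `1` when
that coefficient is positive, namely the larger one, and the equation itself makes the denominator
`(γ + 1) - (γ - 1) t` of the pressure ratio positive there.
-/

/-- A state `s = (ρ₂, p₂)` behind the normally reflected shock when the state ahead of it has
density `ρ`, pressure `p` and speed `u`: `s` is denser, has positive pressure and satisfies both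
Rankine–Hugoniot relations. -/
def IsReflectedState (γ ρ p u : ℝ) (s : ℝ × ℝ) : Prop :=
  ρ < s.1 ∧ 0 < s.2 ∧ u ^ 2 = (s.2 - p) * (s.1 - ρ) / (ρ * s.1) ∧
    s.2 / p = ((γ + 1) * s.1 - (γ - 1) * ρ) / ((γ + 1) * ρ - (γ - 1) * s.1)

/-- The pressure ratio across a shock of compression ratio `t`, given by the Hugoniot curve. It is
meaningful only where the denominator is positive. -/
noncomputable def hugoniotPressureRatio (γ t : ℝ) : ℝ :=
  ((γ + 1) * t - (γ - 1)) / ((γ + 1) - (γ - 1) * t)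

/-- The equation for the compression ratio `t` of a normally reflected shock at Mach number `M`,
obtained by eliminating the pressures from the Rankine–Hugoniot relations. -/
def ReflectionEquation (γ M t : ℝ) : Prop :=
  2 * (t - 1) ^ 2 = M ^ 2 * t * ((γ + 1) - (γ - 1) * t)

/-- The larger root of `ReflectionEquation γ M`, provided that `0 ≤ M` and the leading coefficient
`2 + (γ - 1) * M ^ 2` is positive. -/
noncomputable def reflectedDensityRatio (γ M : ℝ) : ℝ :=
  (4 + (γ + 1) * M ^ 2 + M * √(16 + (γ + 1) ^ 2 * M ^ 2)) / (2 * (2 + (γ - 1) * M ^ 2))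

section ReflectionEquation

variable {γ M t : ℝ}

theorem ReflectionEquation.denom_pos (h : ReflectionEquation γ M t) (ht : 1 < t) :
    0 < (γ + 1) - (γ - 1) * t := by
  have hprod : 0 < M ^ 2 * t * ((γ + 1) - (γ - 1) * t) := by
    rw [← h]
    have := sub_pos.2 ht
    positivity
  exact pos_of_mul_pos_right hprod (by positivity)

theorem ReflectionEquation.leadingCoeff_pos (h : ReflectionEquation γ M t) (hγ : -1 ≤ γ)
    (ht : 1 < t) : 0 < 2 + (γ - 1) * M ^ 2 := by
  have hmul : (2 + (γ - 1) * M ^ 2) * t ^ 2 = 4 * t - 2 + (γ + 1) * (M ^ 2 * t) := by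
    unfold ReflectionEquation at h
    linear_combination h
  have hnonneg : 0 ≤ (γ + 1) * (M ^ 2 * t) := mul_nonneg (by linarith) (by positivity)
  have hpos : 0 < (2 + (γ - 1) * M ^ 2) * t ^ 2 := by linarith
  exact pos_of_mul_pos_left hpos (by positivity)

theorem reflectionEquation_iff_eq_or_eq (hA : 2 + (γ - 1) * M ^ 2 ≠ 0) :
    ReflectionEquation γ M t ↔ t = reflectedDensityRatio γ M ∨
      t = (4 + (γ + 1) * M ^ 2 - M * √(16 + (γ + 1) ^ 2 * M ^ 2)) /
        (2 * (2 + (γ - 1) * M ^ 2)) := by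
  have hdiscrim : discrim (2 + (γ - 1) * M ^ 2) (-(4 + (γ + 1) * M ^ 2)) 2 =
      (M * √(16 + (γ + 1) ^ 2 * M ^ 2)) * (M * √(16 + (γ + 1) ^ 2 * M ^ 2)) := by
    rw [mul_mul_mul_comm, Real.mul_self_sqrt (by positivity), discrim]
    ring
  have hroots := quadratic_eq_zero_iff hA hdiscrim t
  rw [neg_neg] at hroots
  rw [reflectedDensityRatio, ← hroots, ReflectionEquation, ← sub_eq_zero]
  ring_nf

-- Clearing denominators, the comparison of either root with `1` becomes one half of this bound.
theorem abs_sub_three_mul_lt_sqrt (hA : 0 < 2 + (γ - 1) * M ^ 2) :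
    |(γ - 3) * M| < √(16 + (γ + 1) ^ 2 * M ^ 2) :=
  Real.lt_sqrt_of_sq_lt (by rw [sq_abs]; linarith)

theorem one_lt_reflectedDensityRatio (hM : 0 < M) (hA : 0 < 2 + (γ - 1) * M ^ 2) :
    1 < reflectedDensityRatio γ M := by
  have hsqrt := mul_lt_mul_of_pos_left (abs_lt.1 (abs_sub_three_mul_lt_sqrt hA)).2 hM
  rw [reflectedDensityRatio, one_lt_div (by positivity)]
  linarith

theorem reflectionEquation_smaller_root_le_one (hM : 0 ≤ M) (hA : 0 < 2 + (γ - 1) * M ^ 2) :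
    (4 + (γ + 1) * M ^ 2 - M * √(16 + (γ + 1) ^ 2 * M ^ 2)) / (2 * (2 + (γ - 1) * M ^ 2)) ≤ 1 := by
  have hsqrt := mul_le_mul_of_nonneg_left (abs_lt.1 (abs_sub_three_mul_lt_sqrt hA)).1.le hM
  rw [div_le_one (by positivity)]
  linarith

theorem reflectionEquation_reflectedDensityRatio (hA : 2 + (γ - 1) * M ^ 2 ≠ 0) :
    ReflectionEquation γ M (reflectedDensityRatio γ M) :=
  (reflectionEquation_iff_eq_or_eq hA).2 (.inl rfl)

theorem ReflectionEquation.eq_reflectedDensityRatio (h : ReflectionEquation γ M t) (hM : 0 ≤ M)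
    (hA : 0 < 2 + (γ - 1) * M ^ 2) (ht : 1 < t) : t = reflectedDensityRatio γ M :=
  ((reflectionEquation_iff_eq_or_eq hA.ne').1 h).resolve_right fun hsmall =>
    (hsmall.trans_le (reflectionEquation_smaller_root_le_one hM hA)).not_gt ht

theorem one_lt_and_reflectionEquation_iff (hγ : -1 ≤ γ) (hM : 0 < M) :
    1 < t ∧ ReflectionEquation γ M t ↔
      0 < 2 + (γ - 1) * M ^ 2 ∧ t = reflectedDensityRatio γ M := by
  constructor
  · rintro ⟨ht, h⟩
    have hA := h.leadingCoeff_pos hγ ht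
    exact ⟨hA, h.eq_reflectedDensityRatio hM.le hA ht⟩
  · rintro ⟨hA, rfl⟩
    exact ⟨one_lt_reflectedDensityRatio hM hA, reflectionEquation_reflectedDensityRatio hA.ne'⟩

end ReflectionEquation

section RankineHugoniot

variable {γ ρ p u M t : ℝ}

theorem hugoniotPressureRatio_pos_iff (hγ : 0 ≤ γ) (ht : 1 < t) :
    0 < hugoniotPressureRatio γ t ↔ 0 < (γ + 1) - (γ - 1) * t := by
  have hcompression : 0 ≤ γ * (t - 1) := mul_nonneg hγ (sub_nonneg.2 ht.le)
  exact div_pos_iff_of_pos_left (by linarith)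

theorem hugoniotPressureRatio_sub_one (hD : (γ + 1) - (γ - 1) * t ≠ 0) :
    hugoniotPressureRatio γ t - 1 = 2 * γ * (t - 1) / ((γ + 1) - (γ - 1) * t) := by
  rw [hugoniotPressureRatio, div_sub_one hD]
  ring

theorem hugoniotPressureRatio_eq_div (hρ : ρ ≠ 0) :
    hugoniotPressureRatio γ t =
      ((γ + 1) * (ρ * t) - (γ - 1) * ρ) / ((γ + 1) * ρ - (γ - 1) * (ρ * t)) := by
  rw [hugoniotPressureRatio, ← mul_div_mul_left _ _ hρ]
  ring_nf

theorem sq_eq_jump_iff_reflectionEquation (hγ : γ ≠ 0) (hρ : ρ ≠ 0) (hp : p ≠ 0)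
    (hM : M ^ 2 = u ^ 2 * ρ / (γ * p)) (ht : t ≠ 0) (hD : (γ + 1) - (γ - 1) * t ≠ 0) :
    u ^ 2 = (p * hugoniotPressureRatio γ t - p) * (ρ * t - ρ) / (ρ * (ρ * t)) ↔
      ReflectionEquation γ M t := by
  have hu : u ^ 2 = M ^ 2 * (γ * p) / ρ := by
    rw [hM]
    field_simp
  have hjump : (p * hugoniotPressureRatio γ t - p) * (ρ * t - ρ) / (ρ * (ρ * t)) =
      γ * p / ρ * (2 * (t - 1) ^ 2 / (t * ((γ + 1) - (γ - 1) * t))) := by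
    rw [← mul_sub_one, hugoniotPressureRatio_sub_one hD]
    field_simp
  rw [hu, hjump, mul_div_assoc, mul_comm, mul_right_inj' (by positivity),
    eq_div_iff (mul_ne_zero ht hD), ← mul_assoc, eq_comm, ReflectionEquation]

theorem isReflectedState_mul_iff {q : ℝ} (hγ : 0 < γ) (hρ : 0 < ρ) (hp : 0 < p)
    (hM : M ^ 2 = u ^ 2 * ρ / (γ * p)) :
    IsReflectedState γ ρ p u (ρ * t, p * q) ↔
      (1 < t ∧ ReflectionEquation γ M t) ∧ q = hugoniotPressureRatio γ t := by
  simp only [IsReflectedState, ← hugoniotPressureRatio_eq_div hρ.ne', mul_div_cancel_left₀ _ hp.ne',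
    lt_mul_iff_one_lt_right hρ, mul_pos_iff_of_pos_left hp]
  constructor
  · rintro ⟨ht, hq, hjump, rfl⟩
    have hD := (hugoniotPressureRatio_pos_iff hγ.le ht).1 hq
    exact ⟨⟨ht, (sq_eq_jump_iff_reflectionEquation hγ.ne' hρ.ne' hp.ne' hM (by positivity)
      hD.ne').1 hjump⟩, rfl⟩
  · rintro ⟨⟨ht, h⟩, rfl⟩
    have hD := h.denom_pos ht
    exact ⟨ht, (hugoniotPressureRatio_pos_iff hγ.le ht).2 hD,
      (sq_eq_jump_iff_reflectionEquation hγ.ne' hρ.ne' hp.ne' hM (by positivity) hD.ne').2 h, rfl⟩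

theorem isReflectedState_iff {s : ℝ × ℝ} (hγ : 0 < γ) (hρ : 0 < ρ) (hp : 0 < p)
    (hM : M ^ 2 = u ^ 2 * ρ / (γ * p)) (hM0 : 0 < M) :
    IsReflectedState γ ρ p u s ↔ 0 < 2 + (γ - 1) * M ^ 2 ∧
      s = (ρ * reflectedDensityRatio γ M,
        p * hugoniotPressureRatio γ (reflectedDensityRatio γ M)) := by
  obtain ⟨t, q, rfl⟩ : ∃ t q, s = (ρ * t, p * q) :=
    ⟨s.1 / ρ, s.2 / p, by rw [mul_div_cancel₀ _ hρ.ne', mul_div_cancel₀ _ hp.ne']⟩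
  rw [isReflectedState_mul_iff hγ hρ hp hM,
    one_lt_and_reflectionEquation_iff (by linarith) hM0, Prod.mk.injEq,
    mul_right_inj' hρ.ne', mul_right_inj' hp.ne', and_assoc]
  refine and_congr_right fun _ => and_congr_right fun ht => ?_
  rw [ht]

end RankineHugoniot

theorem normal_reflection_unique_state2_general
    (γ ρ1 p1 u1 M1 : ℝ) (hγ : 0 < γ) (hρ1 : 0 < ρ1) (hp1 : 0 < p1) (hu1 : u1 ≠ 0)
    (hM1 : M1 = √(u1 ^ 2 * ρ1 / (γ * p1))) :
    ((∃! s, IsReflectedState γ ρ1 p1 u1 s) ↔ 0 < 2 + (γ - 1) * M1 ^ 2) ∧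
    ∀ s, IsReflectedState γ ρ1 p1 u1 s →
      0 < (γ + 1) * ρ1 - (γ - 1) * s.1 ∧ s.1 / ρ1 = reflectedDensityRatio γ M1 := by
  have hM1_pos : 0 < M1 := by rw [hM1]; positivity
  have hM1_sq : M1 ^ 2 = u1 ^ 2 * ρ1 / (γ * p1) := by rw [hM1, Real.sq_sqrt (by positivity)]
  have hstate (s : ℝ × ℝ) := isReflectedState_iff (s := s) hγ hρ1 hp1 hM1_sq hM1_pos
  refine ⟨⟨fun ⟨s, hs, _⟩ => ((hstate s).1 hs).1, fun hA =>
    ⟨_, (hstate _).2 ⟨hA, rfl⟩, fun s hs => ((hstate s).1 hs).2⟩⟩, fun s hs => ?_⟩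
  obtain ⟨hA, rfl⟩ := (hstate s).1 hs
  have hdenom := (reflectionEquation_reflectedDensityRatio hA.ne').denom_pos
    (one_lt_reflectedDensityRatio hM1_pos hA)
  exact ⟨by linarith [mul_pos hρ1 hdenom], mul_div_cancel_left₀ _ hρ1.ne'⟩

/-- Normal reflection: given state (1) with density `ρ1`, pressure `p1`, speed `u1 > 0`
for a polytropic gas with adiabatic exponent `γ > 1`, there is a unique state (2)
`(ρ2, p2)` with `ρ2 > ρ1`, `p2 > 0` satisfying the Rankine–Hugoniot relations, and it
satisfies `(γ+1)ρ1 - (γ-1)ρ2 > 0` and the explicit formula for `ρ2/ρ1` in terms of the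
Mach number `M1 = u1/c1`, `c1 = √(γ p1/ρ1)`. -/
theorem normal_reflection_unique_state2
    (γ ρ1 p1 u1 M1 : ℝ) (hγ : 1 < γ) (hρ1 : 0 < ρ1) (hp1 : 0 < p1) (hu1 : 0 < u1)
    (hM1 : M1 = Real.sqrt (u1 ^ 2 * ρ1 / (γ * p1))) :
    (∃! s : ℝ × ℝ, ρ1 < s.1 ∧ 0 < s.2 ∧
        u1 ^ 2 = (s.2 - p1) * (s.1 - ρ1) / (ρ1 * s.1) ∧
        s.2 / p1 = ((γ + 1) * s.1 - (γ - 1) * ρ1) / ((γ + 1) * ρ1 - (γ - 1) * s.1)) ∧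
    (∀ ρ2 p2 : ℝ, ρ1 < ρ2 → 0 < p2 →
        u1 ^ 2 = (p2 - p1) * (ρ2 - ρ1) / (ρ1 * ρ2) →
        p2 / p1 = ((γ + 1) * ρ2 - (γ - 1) * ρ1) / ((γ + 1) * ρ1 - (γ - 1) * ρ2) →
        0 < (γ + 1) * ρ1 - (γ - 1) * ρ2 ∧
        ρ2 / ρ1 = (4 + (γ + 1) * M1 ^ 2 + M1 * Real.sqrt (16 + (γ + 1) ^ 2 * M1 ^ 2)) /
          (2 * (2 + (γ - 1) * M1 ^ 2))) := by
  have hA : 0 < 2 + (γ - 1) * M1 ^ 2 := by have := sub_pos.2 hγ; positivity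
  have ⟨hunique, hratio⟩ := normal_reflection_unique_state2_general γ ρ1 p1 u1 M1
    (by linarith) hρ1 hp1 hu1.ne' hM1
  exact ⟨hunique.2 hA, fun ρ2 p2 hρ hp hjump hhugoniot =>
    hratio (ρ2, p2) ⟨hρ, hp, hjump, hhugoniot⟩⟩
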